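/- Let a, b, c, y be positive real numbers and suppose that y ≤ a + b·log(c + y). Then y ≤ 2b·log b + 2a + c. -/

import Mathlib

/-- If `a, b, c, y` are positive reals with `y ≤ a + b·log(c + y)`,
then `y ≤ 2b·log b + 2a + c`. -/
theorem le_of_le_add_mul_log {a b c y : ℝ} (ha : 0 < a) (hb : 0 < b) (hc : 0 < c)
    (hy : 0 < y) (h : y ≤ a + b * Real.log (c + y)) :
    y ≤ 2 * b * Real.log b + 2 * a + c := by
  have hs : 0 < c + y := by linarith
  have ht : 0 < (c + y) / (2 * b) := by positivity
  have h1 := Real.log_le_sub_one_of_pos ht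
  have h2 := Real.log_le_sub_one_of_pos (show (0 : ℝ) < 2 by norm_num)
  rw [Real.log_div hs.ne' (by positivity), Real.log_mul (by norm_num) hb.ne'] at h1
  have h3 : Real.log (c + y) ≤ Real.log b + (c + y) / (2 * b) := by linarith
  have h4 := mul_le_mul_of_nonneg_left h3 hb.le
  have h5 : b * (Real.log b + (c + y) / (2 * b)) = b * Real.log b + (c + y) / 2 := by
    field_simp
  linarith
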